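/- arXiv:0807.3056 — 2 statements merged into one kernel-verified Lean document; each statement's English description precedes it below -/
import Mathlib

section
/- With the fermionic Fock space V built from a complex vector space 𝒞 with symmetric bilinear form ⟨·,·⟩, the contraction of two fermionic modes is scalar and supported on opposite modes with positive first index: for all u, v ∈ 𝒞 and all m, n ∈ ℤ + 1/2, u(m)v(n) − :u(m)v(n): = ⟨u,v⟩ δ_{m,−n} 𝟙[m > 0] · id_V as operators on V. (This is the componentwise form of the operator product expansion u(z)v(w) = :u(z)v(w): + ⟨u,v⟩/(z−w).) -/
noncomputable section

variable (C : Type*) [AddCommGroup C] [Module ℂ C]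

/-- `W = ⊕_{k ∈ ℤ_{≥0}+1/2} 𝒞^{(k)}`: the direct sum of copies of `𝒞`, the
copy indexed by `k : ℕ` standing for the half-integer `k + 1/2`; the element
of the `k`-th copy corresponding to `u : 𝒞` is the generator `u(-(k+1/2))`. -/
abbrev FockW := ℕ →₀ C

/-- The fermionic Fock space `V = Λ(W)`, the exterior algebra of `W`. -/
abbrev FockV := ExteriorAlgebra ℂ (FockW C)

/-- The creation operator `u(-(k+1/2))`: left exterior multiplication by the
generator `u(-(k+1/2))`. -/
def create (u : C) (k : ℕ) : FockV C →ₗ[ℂ] FockV C :=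
  LinearMap.mulLeft ℂ (ExteriorAlgebra.ι ℂ (Finsupp.single k u))

variable (B : C →ₗ[ℂ] C →ₗ[ℂ] ℂ)

/-- The annihilation operator `u(k+1/2)`: the unique odd derivation of `Λ(W)`
(the left contraction/interior product against the dual vector
`w ↦ ⟨u, w_k⟩`) sending the generator `v(-(l+1/2))` to `⟨u,v⟩ δ_{k,l} · 1`. -/
def annih (u : C) (k : ℕ) : FockV C →ₗ[ℂ] FockV C :=
  CliffordAlgebra.contractLeft ((B u).comp (Finsupp.lapply k))

/-- The mode `u(m/2)` for an odd integer `m` (so that the half-integers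
`m/2 ∈ ℤ + 1/2` are parametrized by odd `m : ℤ`): a creation operator if
`m/2 < 0`, an annihilation operator if `m/2 > 0`. -/
def fop (u : C) (m : ℤ) : FockV C →ₗ[ℂ] FockV C :=
  if m < 0 then create C u ((-m - 1) / 2).toNat else annih C B u ((m - 1) / 2).toNat

/-- The normal ordered product `:u(m/2) v(n/2):` for odd integers `m`, `n`:
it is `u(m/2)v(n/2)` if `m/2 < 0` and `−v(n/2)u(m/2)` if `m/2 > 0`. -/
def nord (u : C) (m : ℤ) (v : C) (n : ℤ) : FockV C →ₗ[ℂ] FockV C :=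
  if m < 0 then (fop C B u m).comp (fop C B v n)
  else -((fop C B v n).comp (fop C B u m))

/-- The normal-ordered quadratic operator
`T_{r₁,r₂}(p) = Σ_{k ∈ ℤ+1/2} :r₁(k) r₂(p−k):` applied to `x ∈ V`, the sum
running over the half-integers `k = j/2` with `j : ℤ` odd (on each vector of
`V` all but finitely many summands act as zero). -/
def Tq (r₁ r₂ : C) (p : ℤ) (x : FockV C) : FockV C :=
  ∑ᶠ (j : ℤ) (_ : Odd j), nord C B r₁ j r₂ (2 * p - j) x

end

/-!
For `m < 0` the product `u(m)v(n)` is already normal ordered. For `m > 0` the contraction is the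
anticommutator of `u(m)` and `v(n)`, and `u(m)` is the interior product with a functional. Interior
products anticommute with one another, while the odd Leibniz rule makes the anticommutator of an
interior product with a left exterior multiplication the pairing of the functional with the vector.
-/

section Clifford

variable {R M : Type*} [CommRing R] [AddCommGroup M] [Module R M] {Q : QuadraticForm R M}

theorem contractLeft_comp_mulLeft_ι_add_swap (d : Module.Dual R M) (w : M) :
    CliffordAlgebra.contractLeft (Q := Q) d ∘ₗ LinearMap.mulLeft R (CliffordAlgebra.ι Q w) +
        LinearMap.mulLeft R (CliffordAlgebra.ι Q w) ∘ₗ CliffordAlgebra.contractLeft d =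
      d w • LinearMap.id := by
  ext x : 1
  simp [CliffordAlgebra.contractLeft_ι_mul]

theorem contractLeft_comp_contractLeft_add_swap (d d' : Module.Dual R M) :
    CliffordAlgebra.contractLeft (Q := Q) d ∘ₗ CliffordAlgebra.contractLeft d' +
      CliffordAlgebra.contractLeft d' ∘ₗ CliffordAlgebra.contractLeft d = 0 := by
  ext x : 1
  exact add_eq_zero_iff_eq_neg.mpr (CliffordAlgebra.contractLeft_comm d d' x)

end Clifford

theorem exists_nat_eq_or_eq_neg_of_odd {m : ℤ} (hm : Odd m) :
    ∃ k : ℕ, m = 2 * k + 1 ∨ m = -(2 * k + 1) := by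
  obtain ⟨j, rfl⟩ := hm
  rcases le_or_gt 0 j with hj | hj
  · exact ⟨j.toNat, by omega⟩
  · exact ⟨(-j - 1).toNat, by omega⟩

section Modes

variable {C : Type*} [AddCommGroup C] [Module ℂ C] (B : C →ₗ[ℂ] C →ₗ[ℂ] ℂ) (u v : C)

theorem annih_comp_create_add_swap (k l : ℕ) :
    annih C B u k ∘ₗ create C v l + create C v l ∘ₗ annih C B u k =
      if k = l then B u v • LinearMap.id else 0 := by
  have pairing : (B u ∘ₗ Finsupp.lapply k) (Finsupp.single l v) = if k = l then B u v else 0 := by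
    simp [Finsupp.single_apply, apply_ite (B u), eq_comm]
  calc annih C B u k ∘ₗ create C v l + create C v l ∘ₗ annih C B u k
      = (B u ∘ₗ Finsupp.lapply k) (Finsupp.single l v) • LinearMap.id :=
        contractLeft_comp_mulLeft_ι_add_swap _ _
    _ = if k = l then B u v • LinearMap.id else 0 := by rw [pairing, ite_smul, zero_smul]

theorem annih_comp_annih_add_swap (k l : ℕ) :
    annih C B u k ∘ₗ annih C B v l + annih C B v l ∘ₗ annih C B u k = 0 :=
  contractLeft_comp_contractLeft_add_swap _ _

theorem fop_two_mul_add_one (k : ℕ) : fop C B u (2 * k + 1) = annih C B u k := by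
  rw [fop, if_neg (by omega)]
  congr 1
  omega

theorem fop_neg_two_mul_add_one (k : ℕ) : fop C B u (-(2 * k + 1)) = create C u k := by
  rw [fop, if_pos (by omega)]
  congr 1
  omega

theorem fop_comp_fop_sub_nord_of_neg {m : ℤ} (hm : m < 0) (n : ℤ) :
    fop C B u m ∘ₗ fop C B v n - nord C B u m v n = 0 := by
  rw [nord, if_pos hm, sub_self]

theorem fop_comp_fop_sub_nord_of_nonneg {m : ℤ} (hm : 0 ≤ m) (n : ℤ) :
    fop C B u m ∘ₗ fop C B v n - nord C B u m v n =
      fop C B u m ∘ₗ fop C B v n + fop C B v n ∘ₗ fop C B u m := by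
  rw [nord, if_neg hm.not_gt, sub_neg_eq_add]

theorem fermionic_contraction_general {m n : ℤ} (hm : Odd m) (hn : Odd n) :
    fop C B u m ∘ₗ fop C B v n - nord C B u m v n =
      if m = -n ∧ 0 < m then B u v • LinearMap.id else 0 := by
  obtain ⟨k, rfl | rfl⟩ := exists_nat_eq_or_eq_neg_of_odd hm
  · rw [fop_comp_fop_sub_nord_of_nonneg B u v (by omega), fop_two_mul_add_one]
    obtain ⟨l, rfl | rfl⟩ := exists_nat_eq_or_eq_neg_of_odd hn
    · rw [fop_two_mul_add_one, annih_comp_annih_add_swap, if_neg (by omega)]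
    · rw [fop_neg_two_mul_add_one, annih_comp_create_add_swap]
      exact if_congr (by omega) rfl rfl
  · rw [fop_comp_fop_sub_nord_of_neg B u v (by omega), if_neg (by omega)]

end Modes

/-- The contraction of two fermionic modes is scalar and supported on opposite
modes with positive first index: for `u, v ∈ 𝒞` and half-integers
`m/2, n/2 ∈ ℤ + 1/2` (`m`, `n` odd),
`u(m/2)v(n/2) − :u(m/2)v(n/2): = ⟨u,v⟩ δ_{m/2,−n/2} 𝟙[m/2 > 0] · id_V`
(the componentwise form of the OPE `u(z)v(w) = :u(z)v(w): + ⟨u,v⟩/(z−w)`). -/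
theorem fermionic_contraction
    (C : Type*) [AddCommGroup C] [Module ℂ C]
    (B : C →ₗ[ℂ] C →ₗ[ℂ] ℂ) (hB : ∀ u v : C, B u v = B v u)
    (u v : C) (m n : ℤ) (hm : Odd m) (hn : Odd n) :
    (fop C B u m).comp (fop C B v n) - nord C B u m v n =
      if m = -n ∧ 0 < m then (B u v) • (LinearMap.id : FockV C →ₗ[ℂ] FockV C) else 0 := by
  exact fermionic_contraction_general B u v hm hn
end

section
/- (Proposition 3.3, componentwise.) With the fermionic Fock space V built from a complex vector space 𝒞 with symmetric bilinear form ⟨·,·⟩, the normal-ordered quadratic operators satisfy, for all r₁, r₂, s₁, s₂ ∈ 𝒞 and all p, q ∈ ℤ: [T_{r₁,r₂}(p), T_{s₁,s₂}(q)] = ⟨r₁,s₂⟩ T_{r₂,s₁}(p+q) − ⟨r₁,s₁⟩ T_{r₂,s₂}(p+q) + ⟨r₂,s₁⟩ T_{r₁,s₂}(p+q) − ⟨r₂,s₂⟩ T_{r₁,s₁}(p+q) + p·δ_{p+q,0}·(⟨r₁,s₂⟩⟨r₂,s₁⟩ − ⟨r₁,s₁⟩⟨r₂,s₂⟩)·id_V,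 as operators on V. (This is the coefficient of z^{−p−1}w^{−q−1} in the field identity [:r₁(z)r₂(z):, :s₁(w)s₂(w):] = Σ ± ⟨r_i,s_j⟩ :·(z)·(z): δ(z−w) + (⟨r₁,s₂⟩⟨r₂,s₁⟩ − ⟨r₁,s₁⟩⟨r₂,s₂⟩) ∂_w δ(z−w).) -/
/-!
For fermion modes `a_u(k)` with `{a_u(j), a_v(k)} = δ_{j+k+1,0} ⟨u,v⟩`, move the point at which the
normal ordering switches from `0` to `c`. Each unit step changes a single summand of `T_{r,s}(n)`,
by an anticommutator `{a_r(j), a_s(n-1-j)}`, so in total it adds `c δ_{n,0} ⟨r,s⟩` to the sum.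

Now `[T_{r₁,r₂}(p), a_s(l)] = ⟨r₂,s⟩ a_{r₁}(p+l) - ⟨r₁,s⟩ a_{r₂}(p+l)`, and bracketing with
`T_{r₁,r₂}(p)` is a derivation. Applied to the summands of `T_{s₁,s₂}(q)`, it shifts a mode by `p`
without changing the order of the product. Where the shifted mode is the first one, the summands
are therefore ordered at `p` instead of `0`, which produces the central term. The antisymmetry
`T_{s,r} = -T_{r,s}` comes from reversing the summation, which moves the cutoff from `0` to `n`.
-/

open Filter Function

/-- `S` is the sum of the family `A` of endomorphisms in the topology of pointwise convergence, the
module being discrete: on each vector only finitely many `A i` are nonzero, and they add up to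
`S`. -/
def HasPointwiseSum {ι R M : Type*} [Semiring R] [AddCommMonoid M] [Module R M]
    (A : ι → Module.End R M) (S : Module.End R M) : Prop :=
  ∀ x, HasFiniteSupport (fun i => A i x) ∧ ∑ᶠ i, A i x = S x

/-- The sum of a family of endomorphisms of which only finitely many are nonzero on each vector. -/
noncomputable def pointwiseSum {ι R M : Type*} [Semiring R] [AddCommMonoid M] [Module R M]
    (A : ι → Module.End R M) (hA : ∀ x, HasFiniteSupport (fun i => A i x)) : Module.End R M where
  toFun x := ∑ᶠ i, A i x
  map_add' x y := by simp only [map_add, finsum_add_distrib (hA x) (hA y)]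
  map_smul' c x := by simp only [map_smul, smul_finsum' c (hA x), RingHom.id_apply]

namespace HasPointwiseSum

section AddCommMonoid

variable {ι κ R M : Type*} [Semiring R] [AddCommMonoid M] [Module R M]
  {A A' : ι → Module.End R M} {S S' : Module.End R M}

theorem unique (h : HasPointwiseSum A S) (h' : HasPointwiseSum A S') : S = S' :=
  LinearMap.ext fun x => (h x).2.symm.trans (h' x).2

theorem single (i : ι) (hA : ∀ j, j ≠ i → A j = 0) : HasPointwiseSum A (A i) := by
  refine fun x => ⟨(Set.finite_singleton i).subset fun j hj => ?_,
    finsum_eq_single _ i fun j hj => by simp [hA j hj]⟩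
  by_contra hji
  exact hj (by simp [hA j hji])

theorem comp_equiv (h : HasPointwiseSum A S) (e : κ ≃ ι) : HasPointwiseSum (fun k => A (e k)) S :=
  fun x => ⟨(h x).1.fun_comp_of_injective e.injective, (finsum_comp_equiv e).trans (h x).2⟩

theorem add (h : HasPointwiseSum A S) (h' : HasPointwiseSum A' S') :
    HasPointwiseSum (fun i => A i + A' i) (S + S') :=
  fun x => ⟨(h x).1.fun_add (h' x).1,
    (finsum_add_distrib (h x).1 (h' x).1).trans (congrArg₂ _ (h x).2 (h' x).2)⟩

theorem mul_left (h : HasPointwiseSum A S) (L : Module.End R M) :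
    HasPointwiseSum (fun i => L * A i) (L * S) :=
  fun x => ⟨(h x).1.fun_comp (map_zero L),
    (map_finsum L (h x).1).symm.trans (congrArg L (h x).2)⟩

theorem mul_right (h : HasPointwiseSum A S) (L : Module.End R M) :
    HasPointwiseSum (fun i => A i * L) (S * L) :=
  fun x => h (L x)

end AddCommMonoid

theorem const_smul {ι R M : Type*} [CommSemiring R] [AddCommMonoid M] [Module R M]
    {A : ι → Module.End R M} {S : Module.End R M} (h : HasPointwiseSum A S) (c : R) :
    HasPointwiseSum (fun i => c • A i) (c • S) :=
  fun x => ⟨(h x).1.fun_comp (smul_zero c),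
    (smul_finsum' c (h x).1).symm.trans (congrArg (c • ·) (h x).2)⟩

section AddCommGroup

variable {ι R M : Type*} [Semiring R] [AddCommGroup M] [Module R M]
  {A A' : ι → Module.End R M} {S S' : Module.End R M}

theorem neg (h : HasPointwiseSum A S) : HasPointwiseSum (fun i => -A i) (-S) :=
  fun x => ⟨(h x).1.fun_neg, (finsum_neg_distrib _).trans (congrArg _ (h x).2)⟩

theorem sub (h : HasPointwiseSum A S) (h' : HasPointwiseSum A' S') :
    HasPointwiseSum (fun i => A i - A' i) (S - S') := by
  simpa only [sub_eq_add_neg] using h.add h'.neg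

theorem lie_left (h : HasPointwiseSum A S) (L : Module.End R M) :
    HasPointwiseSum (fun i => ⁅L, A i⁆) ⁅L, S⁆ :=
  (h.mul_left L).sub (h.mul_right L)

theorem lie_right (h : HasPointwiseSum A S) (L : Module.End R M) :
    HasPointwiseSum (fun i => ⁅A i, L⁆) ⁅S, L⁆ :=
  (h.mul_right L).sub (h.mul_left L)

end AddCommGroup

end HasPointwiseSum

theorem lie_mul_eq_add {A : Type*} [NonUnitalRing A] (x y z : A) :
    ⁅x, y * z⁆ = ⁅x, y⁆ * z + y * ⁅x, z⁆ := by
  simp only [Ring.lie_def]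
  noncomm_ring

theorem mul_lie_eq_sub {A : Type*} [NonUnitalRing A] (x y z : A) :
    ⁅x * y, z⁆ = x * (y * z + z * y) - (x * z + z * x) * y := by
  simp only [Ring.lie_def]
  noncomm_ring

/-- Fermion modes `a_u(k)`, labelled by `u : X`, acting on a module: they satisfy the canonical
anticommutation relations with respect to `B`, and each vector is killed by `a_u(k)` for large `k`.
The integer `k` stands for the half-integer `k + 1/2`, so that the modes `k` and `-k - 1` are
paired and those with `k < 0` are the creation operators. -/
structure FermionModes {X R : Type*} [CommRing R] (B : X → X → R) (M : Type*) [AddCommGroup M]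
    [Module R M] where
  mode : X → ℤ → Module.End R M
  anticomm : ∀ u v j k,
    mode u j * mode v k + mode v k * mode u j = (if j + k + 1 = 0 then B u v else 0) • 1
  eventually_apply_eq_zero : ∀ u x, ∀ᶠ k in atTop, mode u k x = 0

namespace FermionModes

attribute [local instance] LieRing.ofAssociativeRing

variable {X R M : Type*} [CommRing R] {B : X → X → R} [AddCommGroup M] [Module R M]
  (a : FermionModes B M)

/-- The product of `a_r(j)` and `a_s(k)` ordered with respect to the cutoff `c`: the factor
`a_r(j)` counts as a creation operator if `j < c`. The usual normal ordering is the case `c = 0`. -/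
def orderedMul (c : ℤ) (r : X) (j : ℤ) (s : X) (k : ℤ) : Module.End R M :=
  if j < c then a.mode r j * a.mode s k else -(a.mode s k * a.mode r j)

theorem orderedMul_add_one_sub_orderedMul (c : ℤ) (r : X) (j : ℤ) (s : X) (k : ℤ) :
    a.orderedMul (c + 1) r j s k - a.orderedMul c r j s k =
      if j = c then (if j + k + 1 = 0 then B r s else 0) • 1 else 0 := by
  unfold orderedMul
  rw [← a.anticomm]
  split_ifs <;> first | omega | simp

theorem orderedMul_swap (c : ℤ) (r : X) (j : ℤ) (s : X) (k : ℤ) :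
    a.orderedMul c s k r j = -a.orderedMul (j + k + 1 - c) r j s k := by
  unfold orderedMul
  split_ifs <;> first | omega | simp

theorem orderedMul_lie_mode (c : ℤ) (r : X) (j : ℤ) (s : X) (k : ℤ) (t : X) (l : ℤ) :
    ⁅a.orderedMul c r j s k, a.mode t l⁆ =
      (if k + l + 1 = 0 then B s t else 0) • a.mode r j -
        (if j + l + 1 = 0 then B r t else 0) • a.mode s k := by
  unfold orderedMul
  split_ifs <;>
    simp [neg_lie, mul_lie_eq_sub, a.anticomm, *]

theorem hasFiniteSupport_orderedMul_apply (r s : X) (n : ℤ) (x : M) :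
    HasFiniteSupport fun j => a.orderedMul 0 r j s (n - 1 - j) x := by
  have h_top : ∀ᶠ j in atTop, a.orderedMul 0 r j s (n - 1 - j) x = 0 := by
    filter_upwards [a.eventually_apply_eq_zero r x, eventually_ge_atTop 0] with j hj h0
    simp [orderedMul, h0.not_gt, hj]
  have h_bot : ∀ᶠ j in atBot, a.orderedMul 0 r j s (n - 1 - j) x = 0 := by
    have h_tendsto : Tendsto (fun j : ℤ => n - 1 - j) atBot atTop :=
      tendsto_atTop_add_const_left _ _ tendsto_neg_atBot_atTop
    filter_upwards [h_tendsto.eventually (a.eventually_apply_eq_zero s x),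
      eventually_lt_atBot 0] with j hj h0
    simp [orderedMul, h0, hj]
  exact eventually_cofinite.1 (Int.cofinite_eq ▸ eventually_sup.2 ⟨h_bot, h_top⟩)

/-- The normal-ordered quadratic operator `T_{r,s}(n)`. The modes `j` and `n - 1 - j` stand for
half-integers with sum `n`. -/
noncomputable def quadratic (r s : X) (n : ℤ) : Module.End R M :=
  pointwiseSum (fun j => a.orderedMul 0 r j s (n - 1 - j))
    (a.hasFiniteSupport_orderedMul_apply r s n)

theorem hasPointwiseSum_quadratic (r s : X) (n : ℤ) :
    HasPointwiseSum (fun j => a.orderedMul 0 r j s (n - 1 - j)) (a.quadratic r s n) :=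
  fun x => ⟨a.hasFiniteSupport_orderedMul_apply r s n x, rfl⟩

theorem hasPointwiseSum_orderedMul (c : ℤ) (r s : X) (n : ℤ) :
    HasPointwiseSum (fun j => a.orderedMul c r j s (n - 1 - j))
      (a.quadratic r s n + (if n = 0 then (c : R) * B r s else 0) • 1) := by
  have step (c : ℤ) : HasPointwiseSum
      (fun j => a.orderedMul (c + 1) r j s (n - 1 - j) - a.orderedMul c r j s (n - 1 - j))
      ((if n = 0 then B r s else 0) • 1) := by
    simp only [orderedMul_add_one_sub_orderedMul]
    convert HasPointwiseSum.single c fun j hj => if_neg hj using 1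
    simp
  induction c using Int.induction_on with
  | zero => simpa using a.hasPointwiseSum_quadratic r s n
  | succ i ih =>
    convert ih.add (step i) using 1
    · simp
    · split_ifs <;> push_cast <;> module
  | pred i ih =>
    convert ih.sub (step (-i - 1)) using 1
    · simp
    · split_ifs <;> push_cast <;> module

theorem quadratic_swap (r s : X) (n : ℤ) : a.quadratic s r n = -a.quadratic r s n := by
  have h_swap : HasPointwiseSum (fun j => a.orderedMul 0 s (n - 1 - j) r j)
      (-(a.quadratic r s n + (if n = 0 then (n : R) * B r s else 0) • 1)) := by
    convert (a.hasPointwiseSum_orderedMul n r s n).neg using 2 with j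
    rw [a.orderedMul_swap]
    congr 2
    ring
  have h_reflect : HasPointwiseSum (fun j => a.orderedMul 0 s (n - 1 - j) r j)
      (a.quadratic s r n) := by
    simpa using (a.hasPointwiseSum_quadratic s r n).comp_equiv (Equiv.subLeft (n - 1))
  rw [h_reflect.unique h_swap]
  split_ifs with hn <;> simp [hn]

theorem quadratic_lie_mode (r₁ r₂ : X) (p : ℤ) (s : X) (l : ℤ) :
    ⁅a.quadratic r₁ r₂ p, a.mode s l⁆ =
      B r₂ s • a.mode r₁ (p + l) - B r₁ s • a.mode r₂ (p + l) := by
  have h_snd : HasPointwiseSum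
      (fun j => (if p - 1 - j + l + 1 = 0 then B r₂ s else 0) • a.mode r₁ j)
      (B r₂ s • a.mode r₁ (p + l)) := by
    convert HasPointwiseSum.single (p + l) fun j hj => ?_ using 1
    · rw [if_pos (by ring)]
    · rw [if_neg (by omega), zero_smul]
  have h_fst : HasPointwiseSum
      (fun j => (if j + l + 1 = 0 then B r₁ s else 0) • a.mode r₂ (p - 1 - j))
      (B r₁ s • a.mode r₂ (p + l)) := by
    convert HasPointwiseSum.single (-l - 1) fun j hj => ?_ using 1
    · rw [if_pos (by omega), show p - 1 - (-l - 1) = p + l by ring]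
    · rw [if_neg (by omega), zero_smul]
  refine ((a.hasPointwiseSum_quadratic r₁ r₂ p).lie_right (a.mode s l)).unique ?_
  simpa only [orderedMul_lie_mode] using h_snd.sub h_fst

theorem quadratic_lie_orderedMul (r₁ r₂ : X) (p c : ℤ) (s₁ : X) (k : ℤ) (s₂ : X) (l : ℤ) :
    ⁅a.quadratic r₁ r₂ p, a.orderedMul c s₁ k s₂ l⁆ =
      (B r₂ s₁ • a.orderedMul (p + c) r₁ (p + k) s₂ l -
        B r₁ s₁ • a.orderedMul (p + c) r₂ (p + k) s₂ l) +
      (B r₂ s₂ • a.orderedMul c s₁ k r₁ (p + l) - B r₁ s₂ • a.orderedMul c s₁ k r₂ (p + l)) := by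
  simp only [orderedMul, add_lt_add_iff_left]
  split_ifs
  · simp only [lie_mul_eq_add, quadratic_lie_mode, sub_mul, mul_sub,
      smul_mul_assoc, mul_smul_comm]
  · simp only [lie_neg, lie_mul_eq_add, quadratic_lie_mode, sub_mul, mul_sub,
      smul_mul_assoc, mul_smul_comm]
    module

end FermionModes

theorem bracket_normal_ordered_quadratics_general {X R M : Type*} [CommRing R] {B : X → X → R}
    [AddCommGroup M] [Module R M] (a : FermionModes B M) (r₁ r₂ s₁ s₂ : X) (p q : ℤ) :
    ⁅a.quadratic r₁ r₂ p, a.quadratic s₁ s₂ q⁆ =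
      B r₁ s₂ • a.quadratic r₂ s₁ (p + q) - B r₁ s₁ • a.quadratic r₂ s₂ (p + q)
        + B r₂ s₁ • a.quadratic r₁ s₂ (p + q) - B r₂ s₂ • a.quadratic r₁ s₁ (p + q)
        + (if p + q = 0 then (p : R) * (B r₁ s₂ * B r₂ s₁ - B r₁ s₁ * B r₂ s₂) else 0) • 1 := by
  have h_fst (r : X) : HasPointwiseSum (fun k => a.orderedMul p r (p + k) s₂ (q - 1 - k))
      (a.quadratic r s₂ (p + q) + (if p + q = 0 then (p : R) * B r s₂ else 0) • 1) := by
    convert (a.hasPointwiseSum_orderedMul p r s₂ (p + q)).comp_equiv (Equiv.addLeft p) using 3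
    · rfl
    · rw [Equiv.coe_addLeft]
      ring
  have h_snd (r : X) : HasPointwiseSum (fun k => a.orderedMul 0 s₁ k r (p + (q - 1 - k)))
      (a.quadratic s₁ r (p + q)) := by
    simpa only [add_sub_assoc, sub_sub] using a.hasPointwiseSum_quadratic s₁ r (p + q)
  have h_lie := (a.hasPointwiseSum_quadratic s₁ s₂ q).lie_left (a.quadratic r₁ r₂ p)
  simp only [a.quadratic_lie_orderedMul, add_zero] at h_lie
  rw [h_lie.unique ((((h_fst r₁).const_smul _).sub ((h_fst r₂).const_smul _)).add
    (((h_snd r₁).const_smul _).sub ((h_snd r₂).const_smul _))),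
    a.quadratic_swap r₁ s₁, a.quadratic_swap r₂ s₁]
  split_ifs <;> module

theorem finsum_odd {M : Type*} [AddCommMonoid M] (f : ℤ → M) :
    ∑ᶠ (j : ℤ) (_ : Odd j), f j = ∑ᶠ k, f (2 * k + 1) := by
  have h_odd (j : ℤ) : Odd j ↔ j ∈ Set.range fun k : ℤ => 2 * k + 1 :=
    exists_congr fun _ => eq_comm
  simp only [h_odd]
  exact finsum_mem_range fun j k h => by simpa using h

section Fock

variable {C : Type*} [AddCommGroup C] [Module ℂ C] (B : C →ₗ[ℂ] C →ₗ[ℂ] ℂ)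

theorem create_anticomm (u v : C) (k l : ℕ) :
    create C u k * create C v l + create C v l * create C u k = 0 := by
  refine LinearMap.ext fun x => ?_
  simp [create, ← mul_assoc, ← add_mul, ExteriorAlgebra.ι_add_mul_swap]

theorem annih_anticomm (u v : C) (k l : ℕ) :
    annih C B u k * annih C B v l + annih C B v l * annih C B u k = 0 :=
  LinearMap.ext fun x => eq_neg_iff_add_eq_zero.1 (CliffordAlgebra.contractLeft_comm _ _ x)

theorem annih_create_anticomm (u v : C) (k l : ℕ) :
    annih C B u k * create C v l + create C v l * annih C B u k =
      (if k = l then B u v else 0) • 1 := by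
  refine LinearMap.ext fun x => ?_
  have h : annih C B u k (create C v l x) =
      B u (Finsupp.single l v k) • x - create C v l (annih C B u k x) :=
    CliffordAlgebra.contractLeft_ι_mul _ _ _
  rw [LinearMap.add_apply, Module.End.mul_apply, Module.End.mul_apply, h, sub_add_cancel]
  by_cases hkl : k = l
  · simp [hkl]
  · simp [hkl, Finsupp.single_eq_of_ne hkl]

theorem eventually_annih_eq_zero (u : C) (x : FockV C) : ∀ᶠ k in atTop, annih C B u k x = 0 := by
  induction x using CliffordAlgebra.left_induction with
  | algebraMap z => simp [annih]
  | add x y hx hy =>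
    filter_upwards [hx, hy] with k hxk hyk
    rw [map_add, hxk, hyk, add_zero]
  | ι_mul x w hx =>
    have hw : ∀ᶠ k in atTop, w k = 0 := Nat.cofinite_eq_atTop ▸ w.hasFiniteSupport
    filter_upwards [hx, hw] with k hxk hwk
    unfold annih at hxk ⊢
    simp [CliffordAlgebra.contractLeft_ι_mul, hxk, hwk]

theorem fop_natCast (u : C) (k : ℕ) : fop C B u (2 * (k : ℤ) + 1) = annih C B u k := by
  rw [fop, if_neg (by omega)]
  congr
  omega

theorem fop_negSucc (u : C) (k : ℕ) : fop C B u (2 * Int.negSucc k + 1) = create C u k := by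
  rw [fop, if_pos (by omega)]
  congr
  omega

/-- The modes of `𝒞` on its Fock space; the mode `k` is the operator `u(k + 1/2)`. -/
noncomputable def fockModes (hB : ∀ u v : C, B u v = B v u) :
    FermionModes (fun u v => B u v) (FockV C) where
  mode u k := fop C B u (2 * k + 1)
  anticomm u v j k := by
    rcases j with j | j <;> rcases k with k | k <;>
      simp only [Int.ofNat_eq_natCast, fop_natCast, fop_negSucc]
    · rw [annih_anticomm, if_neg (by omega), zero_smul]
    · rw [annih_create_anticomm]
      congr 2
      grind
    · rw [add_comm, annih_create_anticomm, hB]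
      congr 2
      grind
    · rw [create_anticomm, if_neg (by omega), zero_smul]
  eventually_apply_eq_zero u x := by
    simpa only [← Nat.map_cast_int_atTop, eventually_map, fop_natCast]
      using eventually_annih_eq_zero B u x

theorem nord_eq_orderedMul_fockModes (hB : ∀ u v : C, B u v = B v u) (u v : C) (j k : ℤ) :
    nord C B u (2 * j + 1) v (2 * k + 1) = (fockModes B hB).orderedMul 0 u j v k := by
  unfold nord FermionModes.orderedMul
  congr 1
  grind

theorem Tq_eq_quadratic_fockModes (hB : ∀ u v : C, B u v = B v u) (r s : C) (n : ℤ)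
    (x : FockV C) : Tq C B r s n x = (fockModes B hB).quadratic r s n x := by
  have h_index (k : ℤ) : 2 * n - (2 * k + 1) = 2 * (n - 1 - k) + 1 := by ring
  simp only [Tq, finsum_odd, h_index, nord_eq_orderedMul_fockModes B hB]
  rfl

end Fock

/-- Proposition 3.3, componentwise: the brackets among the normal-ordered
quadratic operators are
`[T_{r₁,r₂}(p), T_{s₁,s₂}(q)] = ⟨r₁,s₂⟩ T_{r₂,s₁}(p+q) − ⟨r₁,s₁⟩ T_{r₂,s₂}(p+q)`
`+ ⟨r₂,s₁⟩ T_{r₁,s₂}(p+q) − ⟨r₂,s₂⟩ T_{r₁,s₁}(p+q)`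
`+ p δ_{p+q,0} (⟨r₁,s₂⟩⟨r₂,s₁⟩ − ⟨r₁,s₁⟩⟨r₂,s₂⟩) · id_V`. -/
theorem bracket_normal_ordered_quadratics
    (C : Type*) [AddCommGroup C] [Module ℂ C]
    (B : C →ₗ[ℂ] C →ₗ[ℂ] ℂ) (hB : ∀ u v : C, B u v = B v u)
    (r₁ r₂ s₁ s₂ : C) (p q : ℤ) (x : FockV C) :
    Tq C B r₁ r₂ p (Tq C B s₁ s₂ q x) - Tq C B s₁ s₂ q (Tq C B r₁ r₂ p x) =
      B r₁ s₂ • Tq C B r₂ s₁ (p + q) x - B r₁ s₁ • Tq C B r₂ s₂ (p + q) x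
        + B r₂ s₁ • Tq C B r₁ s₂ (p + q) x - B r₂ s₂ • Tq C B r₁ s₁ (p + q) x
        + (if p + q = 0 then (p : ℂ) * (B r₁ s₂ * B r₂ s₁ - B r₁ s₁ * B r₂ s₂) else 0) • x := by
  simp only [Tq_eq_quadratic_fockModes B hB]
  exact LinearMap.congr_fun
    (bracket_normal_ordered_quadratics_general (fockModes B hB) r₁ r₂ s₁ s₂ p q) x
end
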